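/- Let A be a U(1)-equivariant nondegenerate symmetric bilinear form on a finite-dimensional complex vector space W, where U(1) acts on W complex-linearly with no nonzero fixed vectors and A is invariant under the action. Then the index of A (as a real symmetric form on the underlying real vector space) is even. -/

import Mathlib

/-- The index of (the restriction to a subspace `W` of) a symmetric bilinear form `B`:
the maximal dimension of a subspace of `W` on which `B` is negative definite. -/
noncomputable def negIndexOn {V : Type*} [AddCommGroup V] [Module ℝ V]
    (B : V →ₗ[ℝ] V →ₗ[ℝ] ℝ) (W : Submodule ℝ V) : ℕ :=
  sSup {n : ℕ | ∃ U : Submodule ℝ V, U ≤ W ∧ Module.finrank ℝ U = n ∧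
    ∀ x ∈ U, x ≠ 0 → B x x < 0}

open Module
open scoped Pointwise

/-- A nondegenerate real skew-symmetric matrix has positive determinant. -/
theorem skew_det_pos {n : ℕ} (B : Matrix (Fin n) (Fin n) ℝ)
    (hB : ∀ i j, B i j = - B j i) (hdet : B.det ≠ 0) : 0 < B.det := by
  let f : ℝ → ℝ := fun s => (s • B + (1 - s) • (1 : Matrix (Fin n) (Fin n) ℝ)).det
  have hf : Continuous f := by
    apply Continuous.matrix_det
    fun_prop
  have hf0 : f 0 = 1 := by simp [f]
  have hf1 : f 1 = B.det := by simp [f]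
  have hquad : ∀ x : Fin n → ℝ, x ⬝ᵥ (B.mulVec x) = 0 := by
    intro x
    have h1 : x ⬝ᵥ (B.mulVec x) = ∑ i, ∑ j, x i * B i j * x j := by
      simp [dotProduct, Matrix.mulVec, Finset.mul_sum, mul_assoc]
    have h2 : ∑ i, ∑ j, x i * B i j * x j = - ∑ i, ∑ j, x i * B i j * x j := by
      conv_lhs => rw [Finset.sum_comm]
      rw [← Finset.sum_neg_distrib]
      refine Finset.sum_congr rfl fun i _ => ?_
      rw [← Finset.sum_neg_distrib]
      refine Finset.sum_congr rfl fun j _ => ?_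
      rw [hB j i]; ring
    rw [h1]; linarith
  have hne : ∀ s ∈ Set.Icc (0 : ℝ) 1, f s ≠ 0 := by
    intro s hs h0
    rcases eq_or_lt_of_le hs.2 with h | h
    · subst h; exact hdet (hf1 ▸ h0)
    · obtain ⟨x, hx, hx0⟩ := Matrix.exists_mulVec_eq_zero_iff.mpr h0
      have h3 : x ⬝ᵥ ((s • B + (1 - s) • (1 : Matrix (Fin n) (Fin n) ℝ)).mulVec x) = 0 := by
        rw [hx0]; simp
      rw [Matrix.add_mulVec, Matrix.smul_mulVec, Matrix.smul_mulVec, dotProduct_add,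
        dotProduct_smul, dotProduct_smul, hquad, Matrix.one_mulVec] at h3
      simp only [smul_eq_mul, mul_zero, zero_add, mul_eq_zero, dotProduct_self_eq_zero] at h3
      rcases h3 with h3 | h3
      · linarith
      · exact hx h3
  by_contra hneg
  rw [← hf1] at hneg
  have hiv := intermediate_value_Icc' (zero_le_one (α := ℝ)) hf.continuousOn
  obtain ⟨s, hs, hs0⟩ := hiv ⟨not_lt.mp hneg, by rw [hf0]; norm_num⟩
  exact hne s hs hs0

theorem even_ncard_neg {n : ℕ} (d : Fin n → ℝ) (h : 0 < ∏ i, d i) :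
    Even {i | d i < 0}.ncard := by
  classical
  have h1 : ∏ i, d i = (∏ i, |d i|) * (-1) ^ {i | d i < 0}.ncard := by
    have h2 : ∀ i, d i = |d i| * (if d i < 0 then -1 else 1) := by
      intro i
      split_ifs with hi
      · rw [abs_of_neg hi]; ring
      · rw [abs_of_nonneg (not_lt.mp hi)]; ring
    conv_lhs => rw [Finset.prod_congr rfl fun i _ => h2 i]
    rw [Finset.prod_mul_distrib, Finset.prod_ite]
    simp [Set.ncard_eq_toFinset_card']
  by_contra hodd
  rw [Nat.not_even_iff_odd] at hodd
  rw [h1, hodd.neg_one_pow] at h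
  have : 0 ≤ ∏ i, |d i| := Finset.prod_nonneg fun i _ => abs_nonneg _
  linarith

/-- Even index from an invertible skew complex-linear operator. -/
theorem even_of_skew (W : Type) [AddCommGroup W] [Module ℂ W] [FiniteDimensional ℂ W]
    (A : W →ₗ[ℝ] W →ₗ[ℝ] ℝ)
    (hsymm : ∀ x y : W, A x y = A y x)
    (hnd : ∀ x : W, (∀ y : W, A x y = 0) → x = 0)
    (X : W →ₗ[ℂ] W) (hX : ∀ x y, A (X x) y = - A x (X y))
    (hinj : ∀ x, X x = 0 → x = 0) :
    Even (negIndexOn A ⊤) := by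
  have : FiniteDimensional ℝ W := FiniteDimensional.complexToReal W
  have hs : LinearMap.IsSymm (A : LinearMap.BilinForm ℝ W) := ⟨fun x y => hsymm x y⟩
  obtain ⟨v, hv⟩ := LinearMap.BilinForm.exists_orthogonal_basis hs
  let Q : QuadraticForm ℝ W := LinearMap.BilinMap.toQuadraticMap A
  have hQ : ∀ x, Q x = A x x := fun x => rfl
  have hidx : negIndexOn A ⊤ = sigNeg Q := by
    unfold negIndexOn
    rw [← (sigNeg_isGreatest Q).csSup_eq]
    congr 1
    ext n
    simp only [Set.mem_setOf_eq, le_top, true_and]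
    refine exists_congr fun U => and_congr_right fun _ => ?_
    constructor
    · intro h x hx
      have := h x x.2 (by simpa using hx)
      simpa [hQ] using this
    · intro h x hxU hx
      have := h ⟨x, hxU⟩ (by simpa using hx)
      simpa [hQ] using this
  have hass : QuadraticMap.associated (R := ℝ) Q = A :=
    QuadraticMap.associated_left_inverse ℝ hsymm
  have heq : QuadraticMap.Equivalent Q
      (QuadraticMap.weightedSumSquares ℝ fun i => Q (v i)) := by
    rw [← QuadraticMap.basisRepr_eq_of_iIsOrtho Q v (by rw [hass]; exact hv)]
    exact ⟨QuadraticMap.isometryEquivBasisRepr Q v⟩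
  rw [hidx, QuadraticForm.sigNeg_of_equiv_weightedSumSquares heq]
  apply even_ncard_neg
  have hortho : ∀ i j, i ≠ j → A (v i) (v j) = 0 := fun i j hij => hv hij
  have hd : ∀ i, Q (v i) ≠ 0 := by
    intro i hi
    apply v.ne_zero i
    apply hnd
    have : A (v i) = 0 := v.ext fun j => by
      by_cases hij : i = j
      · subst hij; exact hi
      · exact hortho i j hij
    intro y; rw [this]; rfl
  let XR : W →ₗ[ℝ] W := X.restrictScalars ℝ
  have hdetX : 0 < LinearMap.det XR := by
    have hne : LinearMap.det X ≠ 0 := by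
      have hu : IsUnit X := (LinearMap.isUnit_iff_ker_eq_bot X).mpr
        (LinearMap.ker_eq_bot'.mpr hinj)
      exact (LinearMap.isUnit_det X hu).ne_zero
    show 0 < LinearMap.det (X.restrictScalars ℝ)
    rw [LinearMap.det_restrictScalars, Algebra.norm_complex_eq]
    exact Complex.normSq_pos.mpr hne
  let M := LinearMap.toMatrix v v XR
  have hdetM : M.det = LinearMap.det XR := LinearMap.det_toMatrix v XR
  let B := Matrix.diagonal (fun i => Q (v i)) * M
  have hBe : ∀ i j, B i j = A (v i) (X (v j)) := by
    intro i j
    have h1 : X (v j) = ∑ k, M k j • v k := by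
      have := v.sum_repr (X (v j))
      rw [← this]
      simp [M, XR, LinearMap.toMatrix_apply]
    rw [h1, map_sum, Finset.sum_eq_single i]
    · simp [B, hQ, mul_comm]
    · intro k _ hk
      rw [map_smul, hortho i k (Ne.symm hk), smul_zero]
    · simp
  have hdetB : B.det = (∏ i, Q (v i)) * M.det := by
    simp [B, Matrix.det_mul]
  have hpos : 0 < B.det := by
    apply skew_det_pos
    · intro i j
      rw [hBe, hBe, hsymm, hX]
    · rw [hdetB, hdetM]
      exact mul_ne_zero (Finset.prod_ne_zero_iff.mpr fun i _ => hd i) hdetX.ne'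
  rw [hdetB, hdetM] at hpos
  exact (pos_iff_pos_of_mul_pos hpos).mpr hdetX

theorem circle_root (u : Circle) (n : ℕ) (hn : n ≠ 0) : ∃ t : Circle, t ^ n = u := by
  obtain ⟨θ, rfl⟩ : ∃ θ : ℝ, Circle.exp θ = u := ⟨_, Circle.exp_arg u⟩
  refine ⟨Circle.exp (θ / n), ?_⟩
  have hn' : (n : ℝ) ≠ 0 := by exact_mod_cast hn
  ext
  rw [Circle.coe_pow, Circle.coe_exp, Circle.coe_exp, ← Complex.exp_nat_mul]
  congr 1
  push_cast
  have : (n : ℂ) ≠ 0 := by exact_mod_cast hn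
  field_simp

/-- A nonzero invariant subspace contains a common eigenvector. -/
theorem exists_common_eigen {G : Type*} (W : Type) [AddCommGroup W] [Module ℂ W]
    [FiniteDimensional ℂ W] (f : G → End ℂ W) (hc : ∀ u v, Commute (f u) (f v)) :
    ∀ (n : ℕ) (V : Submodule ℂ W), finrank ℂ V = n → V ≠ ⊥ →
      (∀ u, ∀ x ∈ V, f u x ∈ V) →
      ∃ x ∈ V, x ≠ 0 ∧ ∃ χ : G → ℂ, ∀ u, f u x = χ u • x := by
  intro n
  induction n using Nat.strong_induction_on with
  | _ n ih =>
  intro V hn hV hinv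
  by_cases hsc : ∀ u, ∃ c : ℂ, ∀ x ∈ V, f u x = c • x
  · choose χ hχ using hsc
    obtain ⟨x, hx, hx0⟩ := Submodule.exists_mem_ne_zero_of_ne_bot hV
    exact ⟨x, hx, hx0, χ, fun u => hχ u x hx⟩
  · push Not at hsc
    obtain ⟨u, hu⟩ := hsc
    have : Nontrivial V := Submodule.nontrivial_iff_ne_bot.mpr hV
    obtain ⟨c, hcv⟩ := Module.End.exists_eigenvalue ((f u).restrict (hinv u))
    obtain ⟨y, hy⟩ := hcv.exists_hasEigenvector
    let V' := V ⊓ (f u).eigenspace c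
    have hyV' : (y : W) ∈ V' := by
      refine ⟨y.2, ?_⟩
      rw [SetLike.mem_coe, Module.End.mem_eigenspace_iff]
      have := hy.apply_eq_smul
      simpa using congrArg Subtype.val this
    have hne : V' ≠ ⊥ := by
      intro h
      rw [h, Submodule.mem_bot] at hyV'
      exact hy.2 (Subtype.ext hyV')
    have hlt : V' < V := by
      refine lt_of_le_of_ne inf_le_left fun h => ?_
      obtain ⟨x, hx, hxc⟩ := hu c
      have : x ∈ V' := h ▸ hx
      exact hxc (Module.End.mem_eigenspace_iff.mp this.2)
    obtain ⟨x, hx, hx0, h⟩ := ih (finrank ℂ V') (hn ▸ Submodule.finrank_lt_finrank_of_lt hlt)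
      V' rfl hne (by
        intro w x hx
        refine ⟨hinv w x hx.1, ?_⟩
        have hx2 := Module.End.mem_eigenspace_iff.mp hx.2
        rw [SetLike.mem_coe, Module.End.mem_eigenspace_iff]
        have := congrArg (fun g : End ℂ W => g x) (hc u w).eq
        simp only [Module.End.mul_apply] at this
        rw [this, hx2, map_smul])
    exact ⟨x, hx.1, hx0, h⟩

theorem exists_good (W : Type) [AddCommGroup W] [Module ℂ W] [FiniteDimensional ℂ W]
    (ρ : Circle →* (W →ₗ[ℂ] W))
    (hfix : ∀ w : W, (∀ u : Circle, ρ u w = w) → w = 0) :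
    ∃ u : Circle, ∀ w, ρ u w = w → w = 0 := by
  classical
  have hc : ∀ u v, Commute (ρ u : End ℂ W) (ρ v) := fun u v => by
    show ρ u * ρ v = ρ v * ρ u
    rw [← map_mul, ← map_mul, mul_comm]
  let E : (Circle → ℂ) → Submodule ℂ W := fun χ => ⨅ u, Module.End.eigenspace (ρ u) (χ u)
  have hmem : ∀ χ x, x ∈ E χ ↔ ∀ u, ρ u x = χ u • x := by
    intro χ x; simp [E, Submodule.mem_iInf]
  have hind : iSupIndep E := by
    refine (Module.End.independent_iInf_maxGenEigenspace_of_forall_mapsTo (fun u => ρ u)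
      (fun i j φ => Module.End.mapsTo_maxGenEigenspace_of_comm (hc j i) φ)).mono fun χ => ?_
    exact iInf_mono fun u => (Module.End.genEigenspace (ρ u) (χ u)).monotone le_top
  have hfin : {χ | E χ ≠ ⊥}.Finite := WellFoundedGT.finite_ne_bot_of_iSupIndep hind
  let H : (Circle → ℂ) → Subgroup Circle := fun χ =>
    { carrier := {u | ∀ x ∈ E χ, ρ u x = x}
      mul_mem' := by
        intro a b ha hb x hx
        rw [map_mul, Module.End.mul_apply, hb x hx, ha x hx]
      one_mem' := by intro x _; simp
      inv_mem' := by
        intro a ha x hx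
        conv_lhs => rw [← ha x hx]
        rw [← Module.End.mul_apply, ← map_mul]; simp }
  by_contra hcon
  push Not at hcon
  have hcov : ⋃ χ ∈ hfin.toFinset, (1 : Circle) • (H χ : Set Circle) = Set.univ := by
    rw [Set.eq_univ_iff_forall]
    intro u
    obtain ⟨w, hw, hw0⟩ := hcon u
    obtain ⟨x, hx, hx0, χ, hχ⟩ := exists_common_eigen W (fun u => (ρ u : End ℂ W)) hc _
      (Module.End.eigenspace (ρ u) 1) rfl
      (by
        intro h
        have : w ∈ Module.End.eigenspace (ρ u) 1 := by
          rw [Module.End.mem_eigenspace_iff, hw, one_smul]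
        rw [h] at this
        exact hw0 (by simpa using this))
      (by
        intro v x hx
        rw [Module.End.mem_eigenspace_iff] at hx ⊢
        have := congrArg (fun g : End ℂ W => g x) (hc u v).eq
        simp only [Module.End.mul_apply] at this
        rw [this, hx, map_smul])
    rw [Module.End.mem_eigenspace_iff, one_smul] at hx
    have hxE : x ∈ E χ := (hmem χ x).mpr hχ
    have hχ1 : χ u = 1 := by
      have h1 : χ u • x = (1 : ℂ) • x := by rw [one_smul, ← hχ u]; exact hx
      exact smul_left_injective ℂ hx0 h1
    simp only [Set.mem_iUnion, one_smul]
    refine ⟨χ, ?_, ?_⟩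
    · simp only [Set.Finite.mem_toFinset, Set.mem_setOf_eq]
      intro h; rw [h] at hxE; exact hx0 (by simpa using hxE)
    · intro y hy
      rw [(hmem χ y).mp hy u, hχ1, one_smul]
  obtain ⟨χ, hχ, hfi⟩ := Subgroup.exists_finiteIndex_of_leftCoset_cover hcov
  simp only [Set.Finite.mem_toFinset, Set.mem_setOf_eq] at hχ
  obtain ⟨x, hx, hx0⟩ := Submodule.exists_mem_ne_zero_of_ne_bot hχ
  apply hx0
  apply hfix
  intro u
  obtain ⟨t, rfl⟩ := circle_root u (H χ).index hfi.index_ne_zero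
  exact (H χ).pow_index_mem t x hx


/-- If `W` is a finite-dimensional complex vector space with a complex-linear `U(1)`
action having no nonzero fixed vectors, and `A` is a `U(1)`-invariant nondegenerate
symmetric bilinear form on the underlying real vector space of `W`, then the index of
`A` is even. -/
theorem equivariant_index_even
    (W : Type) [AddCommGroup W] [Module ℂ W] [FiniteDimensional ℂ W]
    (ρ : Circle →* (W →ₗ[ℂ] W))
    (hfix : ∀ w : W, (∀ u : Circle, ρ u w = w) → w = 0)
    (A : W →ₗ[ℝ] W →ₗ[ℝ] ℝ)
    (hsymm : ∀ x y : W, A x y = A y x)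
    (hnd : ∀ x : W, (∀ y : W, A x y = 0) → x = 0)
    (hinv : ∀ (u : Circle) (x y : W), A (ρ u x) (ρ u y) = A x y) :
    Even (negIndexOn A ⊤) := by
  obtain ⟨u, hu⟩ := exists_good W ρ hfix
  obtain ⟨t, rfl⟩ := circle_root u 2 two_ne_zero
  have hti : ∀ x, ρ t (ρ t⁻¹ x) = x := fun x => by
    rw [← Module.End.mul_apply, ← map_mul]; simp
  have hit : ∀ x, ρ t⁻¹ (ρ t x) = x := fun x => by
    rw [← Module.End.mul_apply, ← map_mul]; simp
  refine even_of_skew W A hsymm hnd (ρ t - ρ t⁻¹) ?_ ?_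
  · intro x y
    have h1 : A (ρ t x) y = A x (ρ t⁻¹ y) := by
      rw [← hinv t x (ρ t⁻¹ y), hti]
    have h2 : A (ρ t⁻¹ x) y = A x (ρ t y) := by
      rw [← hinv t⁻¹ x (ρ t y), hit]
    simp only [LinearMap.sub_apply, map_sub]
    rw [h1, h2]; ring
  · intro x hx
    apply hu
    rw [LinearMap.sub_apply, sub_eq_zero] at hx
    rw [pow_two, map_mul, Module.End.mul_apply, hx, hti]
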